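/- arXiv:1612.00471 — 3 statements merged into one kernel-verified Lean document; each statement's English description precedes it below -/
import Mathlib

section
/- Every Gallai 3-coloring of the edges of the complete graph K_n contains a 2-colored subgraph whose chromatic number is at least n^{2/3} (i.e., there exist two of the three colors such that the spanning subgraph consisting of all edges in those two colors has chromatic number at least n^{2/3}). -/
section GallaiColoring

variable {α : Type*} {c : α → α → Fin 3}

/-- The graph of the edges of color `i` with both ends in `s`. -/
def colorGraphOn (c : α → α → Fin 3) (hsym : ∀ u v, c u v = c v u) (s : Finset α) (i : Fin 3) :
    SimpleGraph α where
  Adj x y := x ≠ y ∧ x ∈ s ∧ y ∈ s ∧ c x y = i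
  symm := ⟨fun x y h => ⟨h.1.symm, h.2.2.1, h.2.1, hsym x y ▸ h.2.2.2⟩⟩
  loopless := ⟨fun _ h => h.1 rfl⟩

/-- A coloring in which no three distinct vertices span a rainbow triangle. -/
def IsGallaiColoring (c : α → α → Fin 3) : Prop :=
  ∀ u v w : α, u ≠ v → v ≠ w → u ≠ w → ¬(c u v ≠ c v w ∧ c v w ≠ c u w ∧ c u v ≠ c u w)

theorem color_ne_of_not_reachable (hsym : ∀ u v, c u v = c v u)
    {s : Finset α} {i : Fin 3} {x y : α} (hx : x ∈ s) (hy : y ∈ s)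
    (h : ¬(colorGraphOn c hsym s i).Reachable x y) : x ≠ y ∧ c x y ≠ i := by
  have hxy : x ≠ y := by
    rintro rfl
    exact h (SimpleGraph.Reachable.refl _)
  exact ⟨hxy, fun hc => h (SimpleGraph.Adj.reachable ⟨hxy, hx, hy, hc⟩)⟩

theorem mem_of_reachable (hsym : ∀ u v, c u v = c v u)
    {s : Finset α} {i : Fin 3} {x y : α} (hx : x ∈ s)
    (h : (colorGraphOn c hsym s i).Reachable x y) : y ∈ s := by
  rw [SimpleGraph.reachable_iff_reflTransGen] at h
  induction h with
  | refl => exact hx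
  | tail _ hbc _ => exact hbc.2.2.1

theorem color_eq_of_reachable (hsym : ∀ u v, c u v = c v u)
    (hG : IsGallaiColoring c) {s : Finset α} {i : Fin 3} {x x' y : α}
    (hy : y ∈ s) (h : (colorGraphOn c hsym s i).Reachable x x')
    (hxy : ¬(colorGraphOn c hsym s i).Reachable x y) : c x y = c x' y := by
  have h' := h
  rw [SimpleGraph.reachable_iff_reflTransGen] at h'
  induction h' with
  | refl => rfl
  | @tail b d hb hbd ih =>
    have hxb := (SimpleGraph.reachable_iff_reflTransGen _ _).2 hb
    rw [ih hxb]
    obtain ⟨h1, h2⟩ := color_ne_of_not_reachable hsym hbd.2.1 hy fun h => hxy (hxb.trans h)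
    obtain ⟨h3, h4⟩ := color_ne_of_not_reachable hsym hbd.2.2.1 hy fun h' => hxy (h.trans h')
    have := hG b d y hbd.1 h3 h1
    have := hbd.2.2.2
    grind

theorem reachable_or_exists_of_reachable_insert [DecidableEq α]
    (hsym : ∀ u v, c u v = c v u) {s : Finset α} {i : Fin 3}
    {v a z : α} (ha : a ∈ s) (h : (colorGraphOn c hsym (insert v s) i).Reachable a z) :
    (colorGraphOn c hsym s i).Reachable a z ∨
      ∃ w ∈ s, (colorGraphOn c hsym s i).Reachable a w ∧ c v w = i := by
  rw [SimpleGraph.reachable_iff_reflTransGen] at h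
  induction h with
  | refl => exact Or.inl (SimpleGraph.Reachable.refl _)
  | @tail b d _ hbd ih =>
    refine ih.elim (fun hb => ?_) Or.inr
    have hbs := mem_of_reachable hsym ha hb
    obtain ⟨hne, -, hd, hc⟩ := hbd
    rcases Finset.mem_insert.1 hd with rfl | hd
    · exact Or.inr ⟨b, hbs, hb, by rw [hsym, hc]⟩
    · exact Or.inl (hb.trans (SimpleGraph.Adj.reachable ⟨hne, hbs, hd, hc⟩))

theorem exists_color_eq_of_reachable_insert [DecidableEq α]
    (hsym : ∀ u v, c u v = c v u) {s : Finset α} {i : Fin 3} {v a : α}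
    (hva : v ≠ a) (h : (colorGraphOn c hsym (insert v s) i).Reachable v a) :
    ∃ w ∈ s, c v w = i := by
  rw [SimpleGraph.reachable_iff_reflTransGen] at h
  rcases Relation.ReflTransGen.cases_head h with rfl | ⟨w, hw, -⟩
  · exact absurd rfl hva
  · exact ⟨w, (Finset.mem_insert.1 hw.2.2.1).resolve_left hw.1.symm, hw.2.2.2⟩

theorem exists_others (i : Fin 3) : ∃ j k : Fin 3, i ≠ j ∧ j ≠ k ∧ i ≠ k ∧
    (∀ l, l = i ∨ l = j ∨ l = k) ∧ ∀ g : Fin 3 → ℕ, ∏ x, g x = g i * (g j * g k) := by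
  fin_cases i
  · exact ⟨1, 2, by decide, by decide, by decide, by decide,
      fun g => by simp [Fin.prod_univ_three]; ring⟩
  · exact ⟨0, 2, by decide, by decide, by decide, by decide,
      fun g => by simp [Fin.prod_univ_three]; ring⟩
  · exact ⟨0, 1, by decide, by decide, by decide, by decide,
      fun g => by simp [Fin.prod_univ_three]; ring⟩

/-- In a Gallai 3-coloring on at least two vertices some color class is disconnected. -/
theorem exists_not_reachable (hsym : ∀ u v, c u v = c v u)
    (hG : IsGallaiColoring c) (s : Finset α) (hs : 2 ≤ s.card) :
    ∃ i, ∃ a ∈ s, ∃ b ∈ s, ¬(colorGraphOn c hsym s i).Reachable a b := by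
  classical
  induction s using Finset.induction_on with
  | empty => simp at hs
  | @insert v s hv ih =>
    rw [Finset.card_insert_of_notMem hv] at hs
    by_contra! hcon
    rcases lt_or_ge s.card 2 with hlt | hge
    · obtain ⟨a, rfl⟩ := Finset.card_eq_one.1 (by lia : s.card = 1)
      have key (i : Fin 3) : c v a = i := by
        obtain ⟨w, hw, h⟩ := exists_color_eq_of_reachable_insert hsym (by simpa using hv)
          (hcon i v (by simp) a (by simp))
        rwa [Finset.mem_singleton.1 hw] at h
      exact absurd ((key 0).symm.trans (key 1)) (by decide)
    obtain ⟨i, a, ha, b, hb, hab⟩ := ih hge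
    have hne {x} (hx : x ∈ s) : v ≠ x := fun h => hv (h ▸ hx)
    have hi (x) (hx : x ∈ s) :
        ∃ w ∈ s, (colorGraphOn c hsym s i).Reachable x w ∧ c v w = i :=
      (reachable_or_exists_of_reachable_insert hsym hx
        (hcon i x (by simp [hx]) v (by simp))).resolve_left
          fun h => hv (mem_of_reachable hsym hx h)
    have hcol (l : Fin 3) : ∃ w ∈ s, c v w = l :=
      exists_color_eq_of_reachable_insert hsym (hne ha) (hcon l v (by simp) a (by simp [ha]))
    obtain ⟨j, k, hij, hjk, hik, hall, -⟩ := exists_others i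
    obtain ⟨x, hx, hxj⟩ := hcol j
    obtain ⟨x', hx', hxk⟩ := hcol k
    have htri (p q) (hp : p ∈ s) (hq : q ∈ s) (hpi : c v p ≠ i) (hqi : c v q = i)
        (hpq : ¬(colorGraphOn c hsym s i).Reachable p q) : c p q = c v p := by
      obtain ⟨h1, h2⟩ := color_ne_of_not_reachable hsym hp hq hpq
      have := hG v p q (hne hp) h1 (hne hq)
      grind
    by_cases hxx : (colorGraphOn c hsym s i).Reachable x x'
    · obtain ⟨y, hy, hxy⟩ : ∃ y ∈ s, ¬(colorGraphOn c hsym s i).Reachable x y := by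
        by_contra! h
        exact hab ((h a ha).symm.trans (h b hb))
      obtain ⟨w, hw, hyw, hwi⟩ := hi y hy
      have hxw : ¬(colorGraphOn c hsym s i).Reachable x w := fun h => hxy (h.trans hyw.symm)
      have h1 := htri x w hx hw (by grind) hwi hxw
      have h2 := htri x' w hx' hw (by grind) hwi fun h => hxw (hxx.trans h)
      have h3 := color_eq_of_reachable hsym hG hw hxx hxw
      grind
    · obtain ⟨w, hw, hxw, hwi⟩ := hi x hx
      obtain ⟨w', hw', hxw', hwi'⟩ := hi x' hx'
      have hxx' : ¬(colorGraphOn c hsym s i).Reachable x' x := fun h => hxx h.symm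
      have h1 := htri x w' hx hw' (by grind) hwi' fun h => hxx (h.trans hxw'.symm)
      have h2 := htri x' w hx' hw (by grind) hwi fun h => hxx' (h.trans hxw.symm)
      have h3 := color_eq_of_reachable hsym hG hx' hxw hxx
      have h4 := color_eq_of_reachable hsym hG hx hxw' hxx'
      have := hsym x x'
      have := hsym x w'
      have := hsym x' w
      grind

/-- If `f i` properly colors the edges whose color is not `i`, then the product of the numbers of
colors used is at least the square of the number of vertices. -/
theorem card_sq_le_prod_card_image (hsym : ∀ u v, c u v = c v u)
    (hG : IsGallaiColoring c) (f : Fin 3 → α → ℕ)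
    (hf : ∀ i x y, x ≠ y → c x y ≠ i → f i x ≠ f i y) (s : Finset α) :
    s.card ^ 2 ≤ ∏ i, (s.image (f i)).card := by
  classical
  induction s using Finset.strongInduction with
  | H s ih =>
    rcases lt_or_ge s.card 2 with hlt | hge
    · rcases s.eq_empty_or_nonempty with rfl | hne
      · simp
      · rw [show s.card = 1 by have := hne.card_pos; lia, one_pow]
        exact Finset.prod_pos fun i _ => (hne.image _).card_pos
    obtain ⟨i, a, ha, b, hb, hab⟩ := exists_not_reachable hsym hG s hge
    obtain ⟨j, k, hij, hjk, hik, hall, hprod⟩ := exists_others i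
    rw [hprod]
    set q := (colorGraphOn c hsym s i).connectedComponentMk
    set t := fun e => s.filter (q · = e)
    have hreach {x y} : q x = q y ↔ (colorGraphOn c hsym s i).Reachable x y :=
      SimpleGraph.ConnectedComponent.eq
    have hcross {e e' x y} (hee : e ≠ e') (hx : x ∈ t e) (hy : y ∈ t e') :
        ¬(colorGraphOn c hsym s i).Reachable x y := by
      rw [← hreach]
      grind
    have hts (e) : t e ⊂ s := by
      refine Finset.ssubset_iff_subset_ne.2 ⟨Finset.filter_subset _ _, fun h => hab ?_⟩
      rw [← h] at ha hb
      rw [← hreach]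
      grind
    have hi : ∑ e ∈ s.image q, ((t e).image (f i)).card ≤ (s.image (f i)).card := by
      rw [← Finset.card_biUnion]
      · refine Finset.card_le_card (Finset.biUnion_subset.2 fun e _ =>
          Finset.image_subset_image (hts e).1)
      · intro e _ e' _ hee
        simp only [Finset.disjoint_left, Finset.mem_image, not_exists, not_and]
        rintro _ ⟨x, hx, rfl⟩ y hy
        obtain ⟨h1, h2⟩ := color_ne_of_not_reachable hsym ((hts _).1 hx) ((hts _).1 hy)
          (hcross hee hx hy)
        exact (hf i x y h1 h2).symm
    have hjk' : ∑ e ∈ s.image q, ((t e).image (f j)).card * ((t e).image (f k)).card ≤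
        (s.image (f j)).card * (s.image (f k)).card := by
      simp only [← Finset.card_product]
      rw [← Finset.card_biUnion]
      · refine Finset.card_le_card (Finset.biUnion_subset.2 fun e _ =>
          Finset.product_subset_product (Finset.image_subset_image (hts e).1)
            (Finset.image_subset_image (hts e).1))
      · intro e _ e' _ hee
        refine Finset.disjoint_left.2 ?_
        rintro ⟨u, w⟩ h1 h2
        simp only [Finset.mem_product, Finset.mem_image] at h1 h2
        obtain ⟨⟨x, hx, hxu⟩, ⟨x', hx', hxw⟩⟩ := h1
        obtain ⟨⟨y, hy, hyu⟩, ⟨y', hy', hyw⟩⟩ := h2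
        have hxs := (hts _).1 hx
        have hxs' := (hts _).1 hx'
        have hys := (hts _).1 hy
        have hys' := (hts _).1 hy'
        have hxx : (colorGraphOn c hsym s i).Reachable x x' := by
          rw [← hreach]; grind
        have hyy : (colorGraphOn c hsym s i).Reachable y y' := by
          rw [← hreach]; grind
        have h3 := color_eq_of_reachable hsym hG hys hxx (hcross hee hx hy)
        have h4 := color_eq_of_reachable hsym hG hxs' hyy (hcross hee.symm hy hx')
        obtain ⟨n1, c1⟩ := color_ne_of_not_reachable hsym hxs hys (hcross hee hx hy)
        obtain ⟨n2, c2⟩ := color_ne_of_not_reachable hsym hxs' hys' (hcross hee hx' hy')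
        have h5 : c x y = c x' y' := by rw [h3, hsym x' y, h4, hsym]
        have := hf j x y n1
        have := hf k x' y' n2
        grind
    have hcard : s.card = ∑ e ∈ s.image q, (t e).card :=
      Finset.card_eq_sum_card_image q s
    refine le_trans ?_ (Nat.mul_le_mul hi hjk')
    rw [hcard]
    have key := Finset.sum_sq_le_sum_mul_sum_of_sq_le_mul (s.image q)
      (r := fun e => ((t e).card : ℝ))
      (f := fun e => (((t e).image (f i)).card : ℝ))
      (g := fun e => (((t e).image (f j)).card * ((t e).image (f k)).card : ℝ))
      (fun _ _ => by positivity) (fun _ _ => by positivity)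
      (fun e _ => by have := ih (t e) (hts e); rw [hprod] at this; exact_mod_cast this)
    exact_mod_cast key

end GallaiColoring

/-- Every Gallai 3-coloring of the edges of `K_n` contains a 2-colored subgraph
whose chromatic number is at least `n^(2/3)`. The coloring is given as a symmetric
function `c` on ordered pairs of vertices; the Gallai condition says that no three
distinct vertices span a rainbow triangle. For a set `S` of colors, the subgraph
`G_S` consists of the edges whose color lies in `S`. -/
theorem stmt_0 (n : ℕ) (c : Fin n → Fin n → Fin 3)
    (hsym : ∀ u v, c u v = c v u)
    (hGallai : ∀ u v w : Fin n, u ≠ v → v ≠ w → u ≠ w →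
      ¬(c u v ≠ c v w ∧ c v w ≠ c u w ∧ c u v ≠ c u w)) :
    ∃ S : Finset (Fin 3), S.card = 2 ∧
      (n : ℝ) ^ ((2 : ℝ) / 3) ≤
        (((SimpleGraph.fromRel fun u v => c u v ∈ S).chromaticNumber).toNat : ℝ) := by
  classical
  set χ : Fin 3 → ℕ := fun i => ENat.toNat (SimpleGraph.fromRel fun u v =>
    c u v ∈ Finset.univ.erase i).chromaticNumber
  suffices h : ∃ i, n ^ 2 ≤ χ i ^ 3 by
    obtain ⟨i, hi⟩ := h
    refine ⟨Finset.univ.erase i, by simp, ?_⟩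
    have hi' : (n : ℝ) ^ 2 ≤ (χ i : ℝ) ^ 3 := by exact_mod_cast hi
    refine le_of_pow_le_pow_left₀ (n := 3) (by norm_num) (by positivity) ?_
    rw [← Real.rpow_natCast, ← Real.rpow_mul (by positivity)]
    norm_num only [Real.rpow_ofNat]
    exact hi'
  have hcol (i : Fin 3) : (SimpleGraph.fromRel fun u v =>
      c u v ∈ Finset.univ.erase i).Colorable (χ i) :=
    SimpleGraph.colorable_chromaticNumber_of_fintype _
  have C (i : Fin 3) := (hcol i).some
  have key := card_sq_le_prod_card_image hsym hGallai (fun i x => (C i x : ℕ))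
    (fun i x y hxy hc h => (C i).valid (v := x) (w := y)
      (by simp [SimpleGraph.fromRel_adj, hxy, hc]) (Fin.ext h)) Finset.univ
  have hle : n ^ 2 ≤ ∏ i, χ i := by
    rw [Finset.card_univ, Fintype.card_fin] at key
    refine key.trans (Finset.prod_le_prod' fun i _ => ?_)
    calc _ ≤ (Finset.range (χ i)).card := Finset.card_le_card fun m hm => by
          obtain ⟨x, -, rfl⟩ := Finset.mem_image.1 hm
          exact Finset.mem_range.2 (C i x).isLt
      _ = χ i := Finset.card_range _
  obtain ⟨i, -, hi⟩ := Finset.exists_max_image Finset.univ χ Finset.univ_nonempty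
  refine ⟨i, hle.trans ((Finset.prod_le_prod' hi).trans ?_)⟩
  simp
end

section
/- Let r and s be positive integers with s ≤ r. Every Gallai r-coloring of the edges of the complete graph K_n contains an s-colored subgraph whose chromatic number is at least n^{s/r}, i.e., there exists a set S of s colors such that χ(G_S) ≥ n^{s/r}. -/
/-- Two vertices of `T` joined by an edge of color `i`. -/
def ColorAdj {V κ : Type*} (c : V → V → κ) (T : Finset V) (i : κ) (u v : V) : Prop :=
  u ∈ T ∧ v ∈ T ∧ u ≠ v ∧ c u v = i

/-- A coloring without rainbow triangles. -/
def IsGallai {V κ : Type*} (c : V → V → κ) : Prop :=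
  ∀ u v w : V, u ≠ v → v ≠ w → u ≠ w → ¬(c u v ≠ c v w ∧ c v w ≠ c u w ∧ c u v ≠ c u w)

section Gallai

open Relation

variable {V κ : Type*} {c : V → V → κ}

lemma ColorAdj.mem_of_reflTransGen {T : Finset V} {i : κ} {u v : V} (hu : u ∈ T)
    (h : ReflTransGen (ColorAdj c T i) u v) : v ∈ T := by
  induction h with
  | refl => exact hu
  | tail _ h _ => exact h.2.1

lemma ColorAdj.reflTransGen_symm (hsym : ∀ u v, c u v = c v u) {T : Finset V} {i : κ} {u v : V}
    (h : ReflTransGen (ColorAdj c T i) u v) : ReflTransGen (ColorAdj c T i) v u := by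
  induction h with
  | refl => exact .refl
  | tail _ h ih => exact .head ⟨h.2.1, h.1, h.2.2.1.symm, (hsym _ _).trans h.2.2.2⟩ ih

/-- A vertex outside a color component sees the component in a single color, which differs from
the color of the component. -/
lemma IsGallai.color_component_eq (hG : IsGallai c) (hsym : ∀ u v, c u v = c v u)
    {T : Finset V} {i : κ} {z v w : V} (hz : z ∈ T) (hv : v ∈ T)
    (hzv : ¬ ReflTransGen (ColorAdj c T i) z v) (hzw : ReflTransGen (ColorAdj c T i) z w) :
    c v w = c v z ∧ c v w ≠ i ∧ v ≠ w := by
  have key : ∀ w, ReflTransGen (ColorAdj c T i) z w → c v w ≠ i ∧ v ≠ w := by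
    intro w hw
    have hvw : v ≠ w := by rintro rfl; exact hzv hw
    refine ⟨fun h => hzv (hw.tail ⟨ColorAdj.mem_of_reflTransGen hz hw, hv, hvw.symm, ?_⟩), hvw⟩
    rw [hsym, h]
  refine ⟨?_, key w hzw⟩
  induction hzw with
  | refl => rfl
  | @tail a b ha hab ih =>
    obtain ⟨h1, h2⟩ := key a ha
    obtain ⟨h3, h4⟩ := key b (ha.tail hab)
    have := hG v a b h2 hab.2.2.1 h4
    rw [hab.2.2.2] at this
    rw [← ih]
    by_contra hne
    exact this ⟨h1, fun h => h3 h.symm, fun h => hne h.symm⟩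

lemma ColorAdj.reflTransGen_insert [DecidableEq V] {U : Finset V} {x z w : V} {i : κ} (hz : z ∈ U)
    (h : ReflTransGen (ColorAdj c (insert x U) i) z w) :
    (w ∈ U ∧ ReflTransGen (ColorAdj c U i) z w) ∨
      ∃ y ∈ U, ReflTransGen (ColorAdj c U i) z y ∧ c y x = i := by
  induction h with
  | refl => exact Or.inl ⟨hz, .refl⟩
  | @tail a b _ hab ih =>
    rcases ih with ⟨ha, hr⟩ | h
    · obtain ⟨_, hb, hne, hc⟩ := hab
      rcases Finset.mem_insert.1 hb with rfl | hb
      · exact Or.inr ⟨a, ha, hr, hc⟩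
      · exact Or.inl ⟨hb, hr.tail ⟨ha, hb, hne, hc⟩⟩
    · exact Or.inr h

/-- If every color used inside `T` is connected and spanning on `T`, then at most two colors are
used inside `T`. -/
lemma IsGallai.exists_two_colors [Nonempty κ] (hG : IsGallai c) (hsym : ∀ u v, c u v = c v u)
    (T : Finset V)
    (hT : ∀ u ∈ T, ∀ v ∈ T, u ≠ v →
      ∀ a ∈ T, ∀ b ∈ T, ReflTransGen (ColorAdj c T (c u v)) a b) :
    ∃ p q : κ, ∀ u ∈ T, ∀ v ∈ T, u ≠ v → c u v = p ∨ c u v = q := by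
  classical
  induction T using Finset.induction_on with
  | empty => exact ⟨Classical.arbitrary κ, Classical.arbitrary κ, by simp⟩
  | @insert x U hx ih =>
    have hxT : x ∈ insert x U := Finset.mem_insert_self _ _
    have hUT : ∀ u ∈ U, u ∈ insert x U := fun u hu => Finset.mem_insert_of_mem hu
    have hne : ∀ u ∈ U, x ≠ u := fun u hu h => hx (h ▸ hu)
    -- every used color occurs at `x`
    have hstar : ∀ u ∈ insert x U, ∀ v ∈ insert x U, u ≠ v → ∃ y ∈ U, c x y = c u v := by
      intro u hu v hv huv
      obtain ⟨w, hw, hwx⟩ : ∃ w ∈ insert x U, w ≠ x := by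
        by_cases h : u = x
        · exact ⟨v, hv, fun h' => huv (h.trans h'.symm)⟩
        · exact ⟨u, hu, h⟩
      rcases ReflTransGen.cases_head (hT u hu v hv huv x hxT w hw) with h | ⟨y, hy, -⟩
      · exact absurd h.symm hwx
      · rcases Finset.mem_insert.1 hy.2.1 with h | h
        · exact absurd h.symm hy.2.2.1
        · exact ⟨y, h, hy.2.2.2⟩
    suffices h : ∃ p q : κ, ∀ y ∈ U, c x y = p ∨ c x y = q by
      obtain ⟨p, q, h⟩ := h
      refine ⟨p, q, fun u hu v hv huv => ?_⟩
      obtain ⟨y, hy, he⟩ := hstar u hu v hv huv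
      rw [← he]
      exact h y hy
    by_cases hU : ∀ u ∈ U, ∀ v ∈ U, u ≠ v →
      ∀ a ∈ U, ∀ b ∈ U, ReflTransGen (ColorAdj c U (c u v)) a b
    · obtain ⟨p, q, hpq⟩ := ih hU
      by_contra hcon
      push Not at hcon
      obtain ⟨w, hw, hwp, hwq⟩ := hcon p q
      obtain ⟨z, hz, hzw, -⟩ := hcon (c x w) (c x w)
      have := hT x hxT w (hUT w hw) (hne w hw) z (hUT z hz) x hxT
      rcases ReflTransGen.cases_head this with h | ⟨y, hy, -⟩
      · exact hne z hz h.symm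
      · rcases Finset.mem_insert.1 hy.2.1 with rfl | hyU
        · exact hzw ((hsym _ _).trans hy.2.2.2)
        · rcases hpq z hz y hyU hy.2.2.1 with h | h
          · exact hwp (hy.2.2.2.symm.trans h)
          · exact hwq (hy.2.2.2.symm.trans h)
    · push Not at hU
      obtain ⟨u, hu, v, hv, huv, a, ha, b, hb, hab⟩ := hU
      set i := c u v with hi
      have hnear : ∀ z ∈ U, ∃ y ∈ U, ReflTransGen (ColorAdj c U i) z y ∧ c y x = i := by
        intro z hz
        rcases ColorAdj.reflTransGen_insert hz
          (hT u (hUT u hu) v (hUT v hv) huv z (hUT z hz) x hxT) with h | h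
        · exact absurd h.1 hx
        · exact h
      -- the color from `x` is forced by a component not containing the endpoint
      have hforce : ∀ z ∈ U, ∀ t ∈ U, ¬ ReflTransGen (ColorAdj c U i) t z →
          c x z ≠ i → c x z = c z t := by
        intro z hz t ht htz hxz
        obtain ⟨y, hy, hty, hyx⟩ := hnear t ht
        obtain ⟨h1, h2, h3⟩ := hG.color_component_eq hsym ht hz htz hty
        have := hG x y z (hne y hy) h3.symm (hne z hz)
        rw [hsym x y, hyx, hsym y z, h1] at this
        rw [h1] at h2
        by_contra hcon
        exact this ⟨fun h => h2 h.symm, fun h => hcon h.symm, fun h => hxz h.symm⟩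
      have hsymm : ∀ z t, ReflTransGen (ColorAdj c U i) t z →
          ReflTransGen (ColorAdj c U i) z t :=
        fun z t => ColorAdj.reflTransGen_symm hsym
      by_contra hcon
      push Not at hcon
      obtain ⟨z, hz, hzi, -⟩ := hcon i i
      obtain ⟨w, hw, hwi, hwz⟩ := hcon i (c x z)
      by_cases hzw : ReflTransGen (ColorAdj c U i) w z
      · obtain ⟨t, ht, htz⟩ : ∃ t ∈ U, ¬ ReflTransGen (ColorAdj c U i) t z := by
          by_contra hall
          push Not at hall
          exact hab ((hall a ha).trans (hsymm _ _ (hall b hb)))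
        have htw : ¬ ReflTransGen (ColorAdj c U i) t w := fun h => htz (h.trans hzw)
        have h1 := hforce z hz t ht htz hzi
        have h2 := hforce w hw t ht htw hwi
        have h3 := (hG.color_component_eq hsym hz ht (fun h => htz (hsymm _ _ h))
          (hsymm _ _ hzw)).1
        apply hwz
        rw [h1, h2, hsym w t, h3, hsym]
      · have h1 := hforce z hz w hw hzw hzi
        have h2 := hforce w hw z hz (fun h => hzw (hsymm _ _ h)) hwi
        exact hwz (by rw [h1, h2, hsym])

/-- Either at most two colors are used inside `T`, or `T` has a nontrivial homogeneous subset. -/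
lemma IsGallai.two_colors_or_exists_module [Nonempty κ] (hG : IsGallai c)
    (hsym : ∀ u v, c u v = c v u) (T : Finset V) :
    (∃ p q : κ, ∀ u ∈ T, ∀ v ∈ T, u ≠ v → c u v = p ∨ c u v = q) ∨
      ∃ M ⊂ T, ∃ m ∈ M, ∃ m' ∈ M, m ≠ m' ∧ ∀ v ∈ T, v ∉ M → ∀ w ∈ M, c v w = c v m := by
  classical
  by_cases hT : ∀ u ∈ T, ∀ v ∈ T, u ≠ v →
      ∀ a ∈ T, ∀ b ∈ T, ReflTransGen (ColorAdj c T (c u v)) a b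
  · exact Or.inl (hG.exists_two_colors hsym T hT)
  · right
    push Not at hT
    obtain ⟨u, hu, v, hv, huv, a, ha, b, hb, hab⟩ := hT
    refine ⟨T.filter (ReflTransGen (ColorAdj c T (c u v)) u), ?_, u, ?_, v, ?_, huv, ?_⟩
    · rw [Finset.ssubset_iff_subset_ne]
      refine ⟨Finset.filter_subset _ _, fun h => hab ?_⟩
      rw [Finset.filter_eq_self] at h
      exact (ColorAdj.reflTransGen_symm hsym (h a ha)).trans (h b hb)
    · exact Finset.mem_filter.2 ⟨hu, .refl⟩
    · exact Finset.mem_filter.2 ⟨hv, .single ⟨hu, hv, huv, rfl⟩⟩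
    · intro x hx hxM w hw
      rw [Finset.mem_filter] at hxM hw
      exact (hG.color_component_eq hsym hu hx (fun h => hxM ⟨hx, h⟩) hw.2).1

end Gallai

section Products

open Finset

/-- Hölder's inequality for `#I` functions, in power form. -/
lemma sum_pow_card_le_mul_prod {V ι : Type*} (T : Finset V) (I : Finset ι) (hI : I.Nonempty)
    (a : V → ℝ) (g : ι → V → ℝ) (U : ι → ℝ) (M : ℝ) (hM : 0 ≤ M) (ha : ∀ v ∈ T, 0 ≤ a v)
    (hg : ∀ i ∈ I, ∀ v ∈ T, 0 ≤ g i v) (hU : ∀ i ∈ I, ∑ v ∈ T, g i v ≤ U i)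
    (h : ∀ v ∈ T, a v ^ #I ≤ M * ∏ i ∈ I, g i v) :
    (∑ v ∈ T, a v) ^ #I ≤ M * ∏ i ∈ I, U i := by
  have hk : #I ≠ 0 := hI.card_ne_zero
  have hkR : (0 : ℝ) < #I := by exact_mod_cast Nat.pos_of_ne_zero hk
  have hU0 : ∀ i ∈ I, 0 ≤ U i := fun i hi => (sum_nonneg (hg i hi)).trans (hU i hi)
  by_cases hz : ∃ i ∈ I, U i = 0
  · obtain ⟨i, hi, hi0⟩ := hz
    have hg0 : ∀ v ∈ T, g i v = 0 :=
      (sum_eq_zero_iff_of_nonneg (hg i hi)).1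
        (le_antisymm ((hU i hi).trans hi0.le) (sum_nonneg (hg i hi)))
    have ha0 : ∑ v ∈ T, a v = 0 := by
      refine sum_eq_zero fun v hv => ?_
      have := h v hv
      rw [prod_eq_zero hi (hg0 v hv), mul_zero] at this
      exact pow_eq_zero_iff hk |>.1 (le_antisymm this (pow_nonneg (ha v hv) _))
    rw [ha0, zero_pow hk]
    exact mul_nonneg hM (prod_nonneg hU0)
  · push Not at hz
    have hUpos : ∀ i ∈ I, 0 < U i := fun i hi => lt_of_le_of_ne (hU0 i hi) (hz i hi).symm
    have hP : 0 ≤ M * ∏ i ∈ I, U i := mul_nonneg hM (prod_nonneg hU0)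
    set L : ℝ := (M * ∏ i ∈ I, U i) ^ ((#I : ℝ)⁻¹) with hL
    have hL0 : 0 ≤ L := Real.rpow_nonneg hP _
    have hLk : L ^ #I = M * ∏ i ∈ I, U i := Real.rpow_inv_natCast_pow hP hk
    have hv : ∀ v ∈ T, a v ≤ L * ∑ i ∈ I, (#I : ℝ)⁻¹ * (g i v / U i) := by
      intro v hv
      have hq : ∀ i ∈ I, 0 ≤ g i v / U i := fun i hi => div_nonneg (hg i hi v hv) (hU0 i hi)
      have amgm := Real.geom_mean_le_arith_mean_weighted I (fun _ => (#I : ℝ)⁻¹)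
        (fun i => g i v / U i) (fun _ _ => by positivity)
        (by rw [sum_const, nsmul_eq_mul]; field_simp) hq
      refine le_trans ?_ (mul_le_mul_of_nonneg_left amgm hL0)
      rw [Real.finsetProd_rpow _ _ hq]
      refine le_of_pow_le_pow_left₀ hk
        (mul_nonneg hL0 (Real.rpow_nonneg (prod_nonneg hq) _)) ?_
      rw [mul_pow, Real.rpow_inv_natCast_pow (prod_nonneg hq) hk, hLk, mul_assoc,
        ← prod_mul_distrib]
      refine (h v hv).trans_eq ?_
      congr 1
      exact prod_congr rfl fun i hi => (mul_div_cancel₀ _ (hz i hi)).symm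
    have hsum : ∑ v ∈ T, a v ≤ L := by
      refine (sum_le_sum hv).trans ?_
      rw [← mul_sum, sum_comm]
      refine mul_le_of_le_one_right hL0 ?_
      calc ∑ i ∈ I, ∑ v ∈ T, (#I : ℝ)⁻¹ * (g i v / U i)
          ≤ ∑ i ∈ I, (#I : ℝ)⁻¹ := by
            refine sum_le_sum fun i hi => ?_
            rw [← mul_sum, ← sum_div]
            exact mul_le_of_le_one_right (by positivity)
              ((div_le_one (hUpos i hi)).2 (hU i hi))
        _ = 1 := by rw [sum_const, nsmul_eq_mul]; field_simp
    rw [← hLk]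
    exact pow_le_pow_left₀ (sum_nonneg ha) hsum _

variable {κ : Type*} [Fintype κ] [DecidableEq κ]

/-- The product over all `s`-sets, with the sets containing `q` but not `p` paired with those
containing `p` but not `q`. -/
lemma prod_powersetCard_eq_swap (s : ℕ) (p q : κ) (f : Finset κ → ℝ) :
    ∏ S ∈ powersetCard s univ, f S =
      (∏ S ∈ powersetCard s univ with p ∉ S ∧ q ∉ S, f S) *
        ∏ S ∈ powersetCard s univ with p ∈ S,
          f S * (if q ∈ S then 1 else f (S.map (Equiv.swap p q).toEmbedding)) := by
  rw [prod_mul_distrib, prod_ite, prod_const_one, one_mul, filter_filter]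
  have hbij : ∏ S ∈ powersetCard s univ with p ∈ S ∧ q ∉ S,
        f (S.map (Equiv.swap p q).toEmbedding) =
      ∏ S ∈ powersetCard s univ with p ∉ S ∧ q ∈ S, f S := by
    have hinv : ∀ S : Finset κ,
        (S.map (Equiv.swap p q).toEmbedding).map (Equiv.swap p q).toEmbedding = S := by
      intro S
      ext x
      simp [mem_map_equiv]
    refine prod_nbij' (fun S => S.map (Equiv.swap p q).toEmbedding)
      (fun S => S.map (Equiv.swap p q).toEmbedding) ?_ ?_ (fun S _ => hinv S)
      (fun S _ => hinv S) (fun _ _ => rfl)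
    · intro S
      simp [mem_map_equiv, mem_powersetCard]
      tauto
    · intro S
      simp [mem_map_equiv, mem_powersetCard]
      tauto
  rw [hbij, ← prod_filter_mul_prod_filter_not (powersetCard s univ) (fun S => p ∈ S),
    ← prod_filter_mul_prod_filter_not ((powersetCard s univ).filter (fun S => ¬ p ∈ S))
      (fun S => q ∈ S), filter_filter, filter_filter]
  ring

lemma card_powersetCard_filter_mem (s : ℕ) (hs : 0 < s) (p : κ) :
    #{S ∈ powersetCard s (univ : Finset κ) | p ∈ S} = (Fintype.card κ - 1).choose (s - 1) := by
  rw [← card_univ, ← card_erase_of_mem (mem_univ p), ← card_powersetCard]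
  refine card_nbij' (fun S => S.erase p) (fun S => insert p S) ?_ ?_ ?_ ?_
  · intro S hS
    simp only [coe_filter, mem_powersetCard, Set.mem_ofPred_eq, subset_univ, true_and] at hS
    simp only [mem_coe, mem_powersetCard]
    exact ⟨erase_subset_erase _ (subset_univ _), by rw [card_erase_of_mem hS.2, hS.1]⟩
  · intro S hS
    simp only [mem_coe, mem_powersetCard] at hS
    have hp : p ∉ S := fun h => notMem_erase p univ (hS.1 h)
    simp only [coe_filter, mem_powersetCard, Set.mem_ofPred_eq, subset_univ, true_and]
    exact ⟨by rw [card_insert_of_notMem hp, hS.2]; omega, mem_insert_self _ _⟩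
  · intro S hS
    simp only [coe_filter, mem_powersetCard, Set.mem_ofPred_eq] at hS
    exact insert_erase hS.2
  · intro S hS
    simp only [mem_coe, mem_powersetCard] at hS
    exact erase_insert fun h => notMem_erase p univ (hS.1 h)

end Products

section Main

open Finset

lemma sum_card_mul_card_le {V α β : Type*} [DecidableEq α] [DecidableEq β] (T : Finset V)
    (A : V → Finset α) (B : V → Finset β)
    (h : ∀ u ∈ T, ∀ v ∈ T, u ≠ v → Disjoint (A u) (A v) ∨ Disjoint (B u) (B v)) :
    ∑ v ∈ T, #(A v) * #(B v) ≤ #(T.biUnion A) * #(T.biUnion B) := by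
  rw [← card_product]
  simp_rw [← card_product]
  rw [← card_biUnion (fun u hu v hv huv => disjoint_product.2 (h u hu v hv huv))]
  refine card_le_card (biUnion_subset.2 fun v hv => ?_)
  exact product_subset_product (subset_biUnion_of_mem A hv) (subset_biUnion_of_mem B hv)

variable {V κ : Type*} [Fintype κ] [DecidableEq κ] {c : V → V → κ}

/-- The case of two colors of the inequality `IsGallai.sum_pow_le_prod_card`. -/
lemma sum_pow_le_prod_card_of_two_colors {s k : ℕ} {p q : κ} (hk0 : 0 < k)
    (hk : #{S ∈ powersetCard s (univ : Finset κ) | p ∈ S} = k) (T : Finset V)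
    (hT : ∀ u ∈ T, ∀ v ∈ T, u ≠ v → c u v = p ∨ c u v = q)
    (a : V → ℝ) (ha : ∀ v ∈ T, 0 ≤ a v) (F : Finset κ → V → Finset ℕ)
    (hF : ∀ S, ∀ u ∈ T, ∀ v ∈ T, u ≠ v → c u v ∈ S → Disjoint (F S u) (F S v))
    (h : ∀ v ∈ T, a v ^ k ≤ ∏ S ∈ powersetCard s univ, (#(F S v) : ℝ)) :
    (∑ v ∈ T, a v) ^ k ≤ ∏ S ∈ powersetCard s univ, (#(T.biUnion (F S)) : ℝ) := by
  rw [prod_powersetCard_eq_swap s p q]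
  subst hk
  refine sum_pow_card_le_mul_prod T _ (card_pos.1 hk0) a
    (fun S v => (#(F S v) : ℝ) *
      (if q ∈ S then 1 else (#(F (S.map (Equiv.swap p q).toEmbedding) v) : ℝ))) _ _
    (prod_nonneg fun _ _ => by positivity) ha ?_ ?_ ?_
  · intro S _ v _
    positivity
  · intro S hS
    have hpS := (mem_filter.1 hS).2
    split_ifs with hqS
    · simp only [mul_one]
      rw [card_biUnion]
      · push_cast; rfl
      · intro u hu v hv huv
        refine hF S u hu v hv huv ?_
        rcases hT u hu v hv huv with h | h <;> rw [h] <;> assumption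
    · have := sum_card_mul_card_le T (F S) (F (S.map (Equiv.swap p q).toEmbedding)) ?_
      · exact_mod_cast this
      · intro u hu v hv huv
        rcases hT u hu v hv huv with h | h
        · exact Or.inl (hF S u hu v hv huv (h ▸ hpS))
        · refine Or.inr (hF _ u hu v hv huv ?_)
          rw [h, mem_map_equiv]
          simpa using hpS
  · intro v hv
    refine (h v hv).trans ?_
    rw [prod_powersetCard_eq_swap s p q]
    refine mul_le_mul_of_nonneg_right ?_ (prod_nonneg fun _ _ => by positivity)
    refine prod_le_prod (fun _ _ => by positivity) fun S _ => ?_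
    exact_mod_cast card_le_card (subset_biUnion_of_mem (F S) hv)

/-- The weighted form of the product inequality for multicolorings of the graphs `G_S`. -/
lemma IsGallai.sum_pow_le_prod_card [DecidableEq V] [Nonempty κ] (hG : IsGallai c)
    (hsym : ∀ u v, c u v = c v u)
    {s k : ℕ} (hk0 : 0 < k) (hk : ∀ p, #{S ∈ powersetCard s (univ : Finset κ) | p ∈ S} = k)
    (T : Finset V) (a : V → ℝ) (ha : ∀ v ∈ T, 0 ≤ a v) (F : Finset κ → V → Finset ℕ)
    (hF : ∀ S, ∀ u ∈ T, ∀ v ∈ T, u ≠ v → c u v ∈ S → Disjoint (F S u) (F S v))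
    (h : ∀ v ∈ T, a v ^ k ≤ ∏ S ∈ powersetCard s univ, (#(F S v) : ℝ)) :
    (∑ v ∈ T, a v) ^ k ≤ ∏ S ∈ powersetCard s univ, (#(T.biUnion (F S)) : ℝ) := by
  induction T using Finset.strongInduction generalizing a F with
  | H T ih =>
    rcases hG.two_colors_or_exists_module hsym T with
      ⟨p, q, hpq⟩ | ⟨M, hMT, m, hm, m', hm', hmm, hM⟩
    · exact sum_pow_le_prod_card_of_two_colors hk0 (hk p) T hpq a ha F hF h
    · have hsub := hMT.subset
      have hMsum := ih M hMT a (fun v hv => ha v (hsub hv)) F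
        (fun S u hu v hv => hF S u (hsub hu) v (hsub hv)) (fun v hv => h v (hsub hv))
      set T' := insert m (T \ M) with hT'
      have hmem : ∀ v ∈ T', v = m ∨ (v ∈ T ∧ v ∉ M ∧ v ≠ m) := by
        intro v hv
        rcases mem_insert.1 hv with h | h
        · exact Or.inl h
        · rw [mem_sdiff] at h
          exact Or.inr ⟨h.1, h.2, fun he => h.2 (he ▸ hm)⟩
      have hT'T : T' ⊂ T := by
        refine (ssubset_iff_of_subset ?_).2 ⟨m', hsub hm', ?_⟩
        · exact insert_subset (hsub hm) sdiff_subset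
        · intro h
          rcases hmem m' h with h | h
          · exact hmm h.symm
          · exact h.2.1 hm'
      have hquot := ih T' hT'T (Function.update a m (∑ v ∈ M, a v)) ?_
        (fun S => Function.update (F S) m (M.biUnion (F S))) ?_ ?_
      · have hmn : m ∉ T \ M := fun h => (mem_sdiff.1 h).2 hm
        rw [hT', sum_insert hmn, Function.update_self, sum_update_of_notMem hmn, add_comm,
          sum_sdiff hsub] at hquot
        refine hquot.trans_eq (prod_congr rfl fun S _ => ?_)
        congr 2
        rw [biUnion_insert, Function.update_self]
        have : (T \ M).biUnion (Function.update (F S) m (M.biUnion (F S))) =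
            (T \ M).biUnion (F S) :=
          biUnion_congr rfl fun v hv => Function.update_of_ne (ne_of_mem_of_not_mem hv hmn) _ _
        rw [this, ← union_biUnion, union_sdiff_of_subset hsub]
      · intro v hv
        rcases hmem v hv with rfl | ⟨h1, -, h3⟩
        · rw [Function.update_self]
          exact sum_nonneg fun v hv => ha v (hsub hv)
        · rw [Function.update_of_ne h3]
          exact ha v h1
      · have hone : ∀ S, ∀ v ∈ T, v ∉ M → c v m ∈ S →
            Disjoint (F S v) (M.biUnion (F S)) := by
          intro S v hv hvM hc
          refine (disjoint_biUnion_right _ _ _).2 fun w hw => ?_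
          refine hF S v hv w (hsub hw) (fun he => hvM (he ▸ hw)) ?_
          rwa [hM v hv hvM w hw]
        intro S u hu v hv huv hc
        rcases hmem u hu with rfl | ⟨h1, h2, h3⟩
        · rcases hmem v hv with rfl | ⟨h4, h5, h6⟩
          · exact absurd rfl huv
          · rw [Function.update_self, Function.update_of_ne h6]
            exact (hone S v h4 h5 (hsym u v ▸ hc)).symm
        · rcases hmem v hv with rfl | ⟨h4, h5, h6⟩
          · rw [Function.update_self, Function.update_of_ne h3]
            exact hone S u h1 h2 hc
          · rw [Function.update_of_ne h6, Function.update_of_ne h3]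
            exact hF S u h1 v h4 huv hc
      · intro v hv
        rcases hmem v hv with rfl | ⟨h1, -, h3⟩
        · simpa only [Function.update_self] using hMsum
        · simpa only [Function.update_of_ne h3] using h v h1

/-- The product over all `s`-sets `S` of the chromatic numbers of the graphs `G_S` is at least
`n ^ (r - 1).choose (s - 1)`. -/
lemma IsGallai.card_pow_le_prod_chromaticNumber [Fintype V] [Nonempty κ] (hG : IsGallai c)
    (hsym : ∀ u v, c u v = c v u) {s : ℕ} (hs : 0 < s) (hsr : s ≤ Fintype.card κ) :
    (Fintype.card V : ℝ) ^ (Fintype.card κ - 1).choose (s - 1) ≤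
      ∏ S ∈ powersetCard s (univ : Finset κ),
        ((SimpleGraph.fromRel fun u v => c u v ∈ S).chromaticNumber.toNat : ℝ) := by
  set χ : Finset κ → ℕ := fun S =>
    (SimpleGraph.fromRel fun u v => c u v ∈ S).chromaticNumber.toNat
  have hcol : ∀ S : Finset κ, (SimpleGraph.fromRel fun u v => c u v ∈ S).Colorable (χ S) :=
    fun S => SimpleGraph.colorable_chromaticNumber_of_fintype _
  let f : ∀ S : Finset κ, (SimpleGraph.fromRel fun u v => c u v ∈ S).Coloring (Fin (χ S)) :=
    fun S => (hcol S).some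
  classical
  have hmain := hG.sum_pow_le_prod_card hsym (s := s)
    (Nat.choose_pos (show s - 1 ≤ Fintype.card κ - 1 by omega))
    (card_powersetCard_filter_mem s hs) univ (fun _ => 1) (fun _ _ => zero_le_one)
    (fun S v => {(f S v : ℕ)}) ?_ (by simp)
  · simp only [sum_const, nsmul_eq_mul, mul_one, card_univ] at hmain
    refine hmain.trans (prod_le_prod (fun _ _ => by positivity) fun S _ => ?_)
    have hsubset : (univ.biUnion fun v => {(f S v : ℕ)}) ⊆ range (χ S) :=
      biUnion_subset.2 fun v _ => singleton_subset_iff.2 (mem_range.2 (f S v).2)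
    exact_mod_cast (card_le_card hsubset).trans_eq (card_range _)
  · intro S u _ v _ huv hc
    rw [disjoint_singleton]
    intro h
    exact (f S).valid (SimpleGraph.fromRel_adj _ _ _ |>.2 ⟨huv, Or.inl hc⟩) (Fin.ext h)

end Main

/-- Every Gallai `r`-coloring of the edges of `K_n` contains an `s`-colored subgraph
whose chromatic number is at least `n^(s/r)`, for positive integers `s ≤ r`.
The coloring is a symmetric function `c` on ordered pairs of vertices with no
rainbow triangle; for a set `S` of colors, `G_S` consists of the edges whose
color lies in `S`. -/
theorem stmt_1 (r s n : ℕ) (hs : 0 < s) (hr : 0 < r) (hsr : s ≤ r)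
    (c : Fin n → Fin n → Fin r)
    (hsym : ∀ u v, c u v = c v u)
    (hGallai : ∀ u v w : Fin n, u ≠ v → v ≠ w → u ≠ w →
      ¬(c u v ≠ c v w ∧ c v w ≠ c u w ∧ c u v ≠ c u w)) :
    ∃ S : Finset (Fin r), S.card = s ∧
      (n : ℝ) ^ ((s : ℝ) / (r : ℝ)) ≤
        (((SimpleGraph.fromRel fun u v => c u v ∈ S).chromaticNumber).toNat : ℝ) := by
  have : Nonempty (Fin r) := ⟨⟨0, hr⟩⟩
  have hmain := IsGallai.card_pow_le_prod_chromaticNumber (c := c) hGallai hsym hs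
    (by simpa using hsr)
  simp only [Fintype.card_fin] at hmain
  by_contra hcon
  push Not at hcon
  have hN : (Finset.powersetCard s (Finset.univ : Finset (Fin r))).card = r.choose s := by
    simp
  have hNpos : 0 < r.choose s := Nat.choose_pos hsr
  have hchoose : r * (r - 1).choose (s - 1) = r.choose s * s := by
    obtain ⟨r, rfl⟩ := Nat.exists_eq_succ_of_ne_zero hr.ne'
    obtain ⟨s, rfl⟩ := Nat.exists_eq_succ_of_ne_zero hs.ne'
    exact Nat.add_one_mul_choose_eq r s
  set x : ℝ := (n : ℝ) ^ ((s : ℝ) / (r : ℝ)) with hx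
  have hxpow : x ^ r.choose s = (n : ℝ) ^ (r - 1).choose (s - 1) := by
    rw [hx, ← Real.rpow_natCast, ← Real.rpow_mul (Nat.cast_nonneg n), ← Real.rpow_natCast]
    congr 1
    have hrR : (r : ℝ) ≠ 0 := by exact_mod_cast hr.ne'
    have hc : (r : ℝ) * ((r - 1).choose (s - 1) : ℕ) = (r.choose s : ℕ) * s := by
      exact_mod_cast hchoose
    field_simp
    linarith
  have hlt : ∀ S ∈ Finset.powersetCard s (Finset.univ : Finset (Fin r)),
      ((SimpleGraph.fromRel fun u v => c u v ∈ S).chromaticNumber.toNat : ℝ) < x :=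
    fun S hS => hcon S (Finset.mem_powersetCard.1 hS).2
  obtain ⟨S₀, hS₀⟩ : (Finset.powersetCard s (Finset.univ : Finset (Fin r))).Nonempty := by
    rw [← Finset.card_pos, hN]
    exact hNpos
  obtain ⟨y, hy0, hyx, hy⟩ : ∃ y : ℝ, 0 ≤ y ∧ y < x ∧
      ∀ S ∈ Finset.powersetCard s (Finset.univ : Finset (Fin r)),
        ((SimpleGraph.fromRel fun u v => c u v ∈ S).chromaticNumber.toNat : ℝ) ≤ y := by
    obtain ⟨S₁, hS₁, hmax⟩ := Finset.exists_max_image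
      (Finset.powersetCard s (Finset.univ : Finset (Fin r)))
      (fun S => ((SimpleGraph.fromRel fun u v => c u v ∈ S).chromaticNumber.toNat : ℝ))
      ⟨S₀, hS₀⟩
    exact ⟨_, Nat.cast_nonneg _, hlt S₁ hS₁, hmax⟩
  have hle := Finset.prod_le_prod (fun S _ => Nat.cast_nonneg _) hy
  rw [Finset.prod_const, hN] at hle
  have := hmain.trans hle
  rw [← hxpow] at this
  exact absurd this (not_le.2 (pow_lt_pow_left₀ hyx hy0 hNpos.ne'))
end

section
/- Let r, s, n be positive integers with s ≤ r. Every Gallai r-coloring of the edges of an n-vertex tournament contains a directed path on at least n^{s/r} vertices whose edges use at most s colors. -/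
/-- An edge coloring without rainbow triangles. -/
structure IsGallaiColoring_s3 {V C : Type*} (c : V → V → C) : Prop where
  symm : ∀ u v, c u v = c v u
  not_rainbow : ∀ u v w, u ≠ v → v ≠ w → u ≠ w →
    ¬(c u v ≠ c v w ∧ c v w ≠ c u w ∧ c u v ≠ c u w)

/-- Reachability along edges with colors in `D`. -/
abbrev ColorReach {V C : Type*} (c : V → V → C) (D : Set C) : V → V → Prop :=
  Relation.ReflTransGen fun u v => c u v ∈ D

section Gallai

variable {V C : Type*} {c : V → V → C} {D : Set C}

lemma IsGallaiColoring_s3.comp {U : Type*} (hc : IsGallaiColoring_s3 c) {f : U → V}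
    (hf : Function.Injective f) : IsGallaiColoring_s3 fun u v => c (f u) (f v) where
  symm _ _ := hc.symm _ _
  not_rainbow _ _ _ huv hvw huw :=
    hc.not_rainbow _ _ _ (hf.ne huv) (hf.ne hvw) (hf.ne huw)

lemma IsGallaiColoring_s3.reach_symm (hc : IsGallaiColoring_s3 c) {u v : V}
    (h : ColorReach c D u v) : ColorReach c D v u :=
  by
  induction h with
  | refl => exact .refl
  | @tail x y _ hxy ih => exact .head (by rwa [hc.symm y x]) ih

/-- Two vertices of a `D`-component see an outside vertex in the same color. -/
lemma IsGallaiColoring_s3.color_eq_of_reach (hc : IsGallaiColoring_s3 c) {u v x : V}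
    (h : ColorReach c D u v) (hx : ¬ ColorReach c D u x) : c u x = c v x := by
  induction h with
  | refl => rfl
  | @tail b d hb hbd ih =>
    rw [ih]
    have hbx : ¬ ColorReach c D b x := fun h' => hx (hb.trans h')
    have hdx : ¬ ColorReach c D d x := fun h' => hx ((hb.tail hbd).trans h')
    by_contra hne
    have h1 : b ≠ x := by rintro rfl; exact hbx .refl
    have h2 : d ≠ x := by rintro rfl; exact hdx .refl
    have h3 : b ≠ d := by rintro rfl; exact hne rfl
    have h4 : c b x ∉ D := fun h' => hbx (.single h')
    have h5 : c d x ∉ D := fun h' => hdx (.single h')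
    exact hc.not_rainbow b d x h3 h2 h1
      ⟨fun e => h5 (e ▸ hbd), fun e => hne e.symm, fun e => h4 (e ▸ hbd)⟩

/-- A path to `v` from another vertex has a last edge into `v`, reached while avoiding `v`. -/
lemma exists_reach_deleted {v : V} {u : V} (h : ColorReach c D u v) (hu : u ≠ v) :
    ∃ x : {x // x ≠ v}, ColorReach (fun a b : {x // x ≠ v} => c a b) D ⟨u, hu⟩ x ∧
      c x v ∈ D := by
  induction h using Relation.ReflTransGen.head_induction_on with
  | refl => exact absurd rfl hu
  | @head a b hab hb ih =>
    by_cases hbv : b = v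
    · subst hbv
      exact ⟨⟨a, hu⟩, .refl, hab⟩
    · obtain ⟨x, hx, hxv⟩ := ih hbv
      exact ⟨x, .head (by simpa using hab) hx, hxv⟩

/-- If the three singleton color classes `i`, `j`, `k` are connected, deleting a vertex
keeps the class `i` connected. -/
lemma IsGallaiColoring_s3.connected_deleted (hc : IsGallaiColoring_s3 c) {i j k : C}
    (hij : i ≠ j) (hik : i ≠ k) (hjk : j ≠ k)
    (hi : ∀ u v, ColorReach c {i} u v) (hj : ∀ u v, ColorReach c {j} u v)
    (hk : ∀ u v, ColorReach c {k} u v) (v : V) (a b : {x // x ≠ v}) :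
    ColorReach (fun a b : {x // x ≠ v} => c a b) {i} a b := by
  have hc' : IsGallaiColoring_s3 fun a b : {x // x ≠ v} => c a b :=
    hc.comp Subtype.val_injective
  by_contra hab
  have key : ∀ l, i ≠ l → ∀ p : {x // x ≠ v}, c p v = l → ∀ x : {x // x ≠ v}, c x v = i →
      ¬ ColorReach (fun a b : {x // x ≠ v} => c a b) {i} p x → c p x = l := by
    intro l hil p hp x hx hpx
    have hne : (p : V) ≠ x := fun h => hpx (by rw [Subtype.ext h])
    have hpx' : c p x ≠ i := fun h => hpx (.single h)
    by_contra hl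
    refine hc.not_rainbow p x v hne x.2 p.2 ⟨?_, ?_, ?_⟩
    · rw [hx]; exact hpx'
    · rw [hx, hp]; exact hil
    · rw [hp]; exact hl
  obtain ⟨p, -, hp⟩ := exists_reach_deleted (hj a v) a.2
  obtain ⟨q, -, hq⟩ := exists_reach_deleted (hk a v) a.2
  simp only [Set.mem_singleton_iff] at hp hq
  have hout : ∃ y, ¬ ColorReach (fun a b : {x // x ≠ v} => c a b) {i} p y := by
    by_contra! hall
    exact hab ((hc'.reach_symm (hall a)).trans (hall b))
  obtain ⟨y, hy⟩ := hout
  by_cases hpq : ColorReach (fun a b : {x // x ≠ v} => c a b) {i} p q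
  · obtain ⟨x, hyx, hx⟩ := exists_reach_deleted (hi y v) y.2
    have hpx : ¬ ColorReach (fun a b : {x // x ≠ v} => c a b) {i} p x :=
      fun h => hy (h.trans (hc'.reach_symm hyx))
    have hqx : ¬ ColorReach (fun a b : {x // x ≠ v} => c a b) {i} q x :=
      fun h => hpx (hpq.trans h)
    have h1 := key j hij p hp x hx hpx
    have h2 := key k hik q hq x hx hqx
    exact hjk (h1.symm.trans ((hc'.color_eq_of_reach hpq hpx).trans h2))
  · obtain ⟨x, hqx, hx⟩ := exists_reach_deleted (hi q v) q.2
    obtain ⟨z, hpz, hz⟩ := exists_reach_deleted (hi p v) p.2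
    have hpx : ¬ ColorReach (fun a b : {x // x ≠ v} => c a b) {i} p x :=
      fun h => hpq (h.trans (hc'.reach_symm hqx))
    have hqp : ¬ ColorReach (fun a b : {x // x ≠ v} => c a b) {i} q p :=
      fun h => hpq (hc'.reach_symm h)
    have hqz : ¬ ColorReach (fun a b : {x // x ≠ v} => c a b) {i} q z :=
      fun h => hqp (h.trans (hc'.reach_symm hpz))
    have h1 := key j hij p hp x hx hpx
    have h2 := key k hik q hq z hz hqz
    have h3 := hc'.color_eq_of_reach hqx hqp
    have h4 := hc'.color_eq_of_reach hpz hpq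
    have h5 := hc.symm p q
    have h6 := hc.symm x p
    have h7 := hc.symm z q
    simp only at h3 h4
    apply hjk
    rw [← h1, ← h2, ← h6, ← h3, ← h5, h4, h7]

lemma IsGallaiColoring_s3.not_three_connected [Finite V] [Nontrivial V]
    (hc : IsGallaiColoring_s3 c) {i j k : C}
    (hij : i ≠ j) (hik : i ≠ k) (hjk : j ≠ k)
    (hi : ∀ u v, ColorReach c {i} u v) (hj : ∀ u v, ColorReach c {j} u v)
    (hk : ∀ u v, ColorReach c {k} u v) : False := by
  induction hn : Nat.card V using Nat.strong_induction_on generalizing V with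
  | _ n ih =>
    obtain ⟨v, w, hvw⟩ := exists_pair_ne V
    by_cases hU : Nontrivial {x // x ≠ v}
    · refine ih _ ?_ (hc.comp Subtype.val_injective)
        (hc.connected_deleted hij hik hjk hi hj hk v)
        (hc.connected_deleted hij.symm hjk hik hj hi hk v)
        (hc.connected_deleted hik.symm hjk.symm hij hk hi hj v) rfl
      rw [← hn]
      exact Finite.card_subtype_lt (x := v) (by simp)
    · rw [not_nontrivial_iff_subsingleton] at hU
      obtain ⟨x, -, hx⟩ := exists_reach_deleted (hi w v) hvw.symm
      obtain ⟨y, -, hy⟩ := exists_reach_deleted (hj w v) hvw.symm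
      rw [Subsingleton.elim y x] at hy
      exact hij (hx.symm.trans hy)

/-- Gallai's partition theorem: the vertices split into at least two blocks, with a single
color between any two blocks and at most two colors between blocks overall. -/
lemma IsGallaiColoring_s3.exists_partition [Finite V] [Nontrivial V] [Fintype C] [Nontrivial C]
    (hc : IsGallaiColoring_s3 c) :
    ∃ (i j : C) (p : V → V), i ≠ j ∧ (∃ u v, p u ≠ p v) ∧
      (∀ u v, p u ≠ p v → c u v = i ∨ c u v = j) ∧
      ∀ u u' v v', p u = p u' → p v = p v' → p u ≠ p v → c u v = c u' v' := by
  classical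
  obtain ⟨D, hD⟩ : ∃ D : Finset C, Maximal (fun D : Finset C => ∃ u v, ¬ ColorReach c D u v) D := by
    refine Set.Finite.exists_maximal (Set.toFinite _) ⟨∅, ?_⟩
    obtain ⟨u, v, huv⟩ := exists_pair_ne V
    refine ⟨u, v, fun h => huv ?_⟩
    rcases h.cases_head with h | ⟨x, hx, -⟩
    · exact h
    · simp at hx
  let s : Setoid V := ⟨ColorReach c D, fun _ => .refl, hc.reach_symm, .trans⟩
  have hs : ∀ u v, Quotient.mk s u = Quotient.mk s v ↔ ColorReach c D u v := fun u v =>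
    Quotient.eq (r := s)
  have hp : ∀ u v, (Quotient.mk s u).out = (Quotient.mk s v).out ↔ ColorReach c D u v := by
    intro u v
    rw [Quotient.out_inj, hs]
  have hconst : ∀ u u' v v', ColorReach c D u u' → ColorReach c D v v' → ¬ ColorReach c D u v →
      c u v = c u' v' := by
    intro u u' v v' hu hv huv
    rw [hc.color_eq_of_reach hu huv, hc.symm u' v, hc.symm u' v']
    exact hc.color_eq_of_reach hv fun h => huv (hu.trans (hc.reach_symm h))
  have hnotD : ∀ u v, ¬ ColorReach c D u v → c u v ∉ D := fun u v h h' => h (.single h')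
  obtain ⟨u₀, v₀, huv₀⟩ := hD.prop
  have : Nontrivial (Quotient s) := ⟨⟦u₀⟧, ⟦v₀⟧, fun h => huv₀ ((hs _ _).1 h)⟩
  have hout : ∀ u, ColorReach c D (Quotient.mk s u).out u := fun u => (hs _ _).1 (Quotient.out_eq _)
  have hconn : ∀ k ∉ D, ∀ a b : Quotient s,
      ColorReach (fun a b : Quotient s => c a.out b.out) {k} a b := by
    intro k hk a b
    induction a using Quotient.inductionOn with | _ u
    induction b using Quotient.inductionOn with | _ v
    have huv : ColorReach c (insert k D : Finset C) u v := by
      by_contra h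
      exact hk (hD.le_of_ge (y := insert k D) ⟨u, v, h⟩ (Finset.subset_insert _ _)
        (Finset.mem_insert_self _ _))
    induction huv with
    | refl => exact .refl
    | @tail x y _ hxy ih =>
      by_cases h : ColorReach c D x y
      · rwa [← (hs _ _).2 h]
      · refine ih.tail ?_
        have h1 := hnotD _ _ h
        have h2 : c x y = k := by
          simpa [h1] using hxy
        rw [Set.mem_singleton_iff, ← h2]
        exact (hconst _ _ _ _ (hc.reach_symm (hout x)) (hc.reach_symm (hout y)) h).symm
  have hcard : Dᶜ.card ≤ 2 := by
    by_contra! h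
    obtain ⟨i, hi, j, hj, k, hk, hij, hik, hjk⟩ := Finset.two_lt_card.1 h
    rw [Finset.mem_compl] at hi hj hk
    exact IsGallaiColoring_s3.not_three_connected (hc.comp Quotient.out_injective)
      hij hik hjk (hconn i hi) (hconn j hj) (hconn k hk)
  obtain ⟨E, hE, hE2⟩ := Finset.exists_superset_card_eq hcard
    (Nat.succ_le_iff.2 (Fintype.one_lt_card (α := C)))
  obtain ⟨i, j, hij, rfl⟩ := Finset.card_eq_two.1 hE2
  refine ⟨i, j, fun u => (Quotient.mk s u).out, hij, ⟨u₀, v₀, ?_⟩, ?_, ?_⟩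
  · rwa [Ne, hp]
  · intro u v huv
    rw [Ne, hp] at huv
    simpa using hE (Finset.mem_compl.2 (hnotD _ _ huv))
  · intro u u' v v' hu hv huv
    rw [Ne, hp] at huv
    exact hconst _ _ _ _ ((hp _ _).1 hu) ((hp _ _).1 hv) huv

end Gallai

lemma isChain_nodup_of_acyclic {V : Type*} {E : V → V → Prop}
    (hE : ∀ x, ¬ Relation.TransGen E x x) {l : List V} (hl : l.IsChain E) : l.Nodup := by
  have h : l.IsChain (Relation.TransGen E) := hl.imp fun _ _ h => .single h
  refine h.pairwise.imp ?_
  rintro a _ hab rfl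
  exact hE a hab

lemma transGen_sup_pair {V : Type*} {E : V → V → Prop} {u v x y : V}
    (h : Relation.TransGen (fun a b => E a b ∨ a = u ∧ b = v) x y) :
    Relation.TransGen E x y ∨ Relation.ReflTransGen E x u ∧ Relation.ReflTransGen E v y := by
  induction h with
  | single h =>
    rcases h with h | ⟨rfl, rfl⟩
    · exact .inl (.single h)
    · exact .inr ⟨.refl, .refl⟩
  | tail _ h ih =>
    rcases h with h | ⟨rfl, rfl⟩
    · exact ih.imp (fun h' => h'.tail h) fun h' => ⟨h'.1, h'.2.tail h⟩
    · exact .inr ⟨ih.elim (fun h' => h'.to_reflTransGen) fun h' => h'.1, .refl⟩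

/-- The Gallai–Roy theorem: an orientation has a directed path with at least as many vertices
as the number of colors used by a suitable proper coloring. -/
lemma exists_path_and_proper_coloring {V : Type*} [Fintype V] [Nonempty V] (R : V → V → Prop) :
    ∃ (l : List V) (g : V → ℕ), l.Nodup ∧ l.IsChain R ∧
      (Finset.univ.image g).card ≤ l.length ∧ ∀ u v, u ≠ v → R u v → g u ≠ g v := by
  classical
  obtain ⟨E, hE⟩ : ∃ E : V → V → Prop,
      Maximal (fun E => E ≤ R ∧ ∀ x, ¬ Relation.TransGen E x x) E := by
    refine Set.Finite.exists_maximal (Set.toFinite _) ⟨⊥, bot_le, fun x h => ?_⟩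
    rcases Relation.TransGen.head'_iff.1 h with ⟨y, hy, -⟩
    exact hy
  obtain ⟨⟨hER, hac⟩, hmax⟩ := hE
  let L : V → ℕ → Prop := fun v n => ∃ l : List V, l.IsChain E ∧ l.head? = some v ∧ l.length = n
  have hL1 : ∀ v, L v 1 := fun v => ⟨[v], by simp, by simp, by simp⟩
  have hLle : ∀ v n, L v n → n ≤ Fintype.card V := by
    rintro v n ⟨l, hl, -, rfl⟩
    exact (isChain_nodup_of_acyclic hac hl).length_le_card
  have hcard : 1 ≤ Fintype.card V := Fintype.card_pos
  let g : V → ℕ := fun v => Nat.findGreatest (L v) (Fintype.card V)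
  have hg : ∀ v, L v (g v) := fun v => Nat.findGreatest_spec hcard (hL1 v)
  have hgle : ∀ v n, L v n → n ≤ g v := fun v n h => Nat.le_findGreatest (hLle v n h) h
  have hlt : ∀ u v, E u v → g v < g u := by
    intro u v huv
    obtain ⟨l, hl, hv, hn⟩ := hg v
    refine hgle u _ ⟨u :: l, ?_, by simp, by simp [hn]⟩
    rw [List.isChain_cons]
    refine ⟨fun y hy => ?_, hl⟩
    rw [hv, Option.mem_some_iff] at hy
    exact hy ▸ huv
  have hle : ∀ u v, Relation.ReflTransGen E u v → u = v ∨ g v < g u := by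
    intro u v h
    induction h with
    | refl => exact .inl rfl
    | tail _ h ih =>
      right
      rcases ih with rfl | ih
      · exact hlt _ _ h
      · exact (hlt _ _ h).trans ih
  obtain ⟨m, -, hm⟩ := Finset.exists_max_image Finset.univ g Finset.univ_nonempty
  obtain ⟨l, hl, -, hn⟩ := hg m
  refine ⟨l, g, isChain_nodup_of_acyclic hac hl, hl.imp fun _ _ h => hER _ _ h, ?_, ?_⟩
  · calc (Finset.univ.image g).card ≤ (Finset.Icc 1 (g m)).card := by
          refine Finset.card_le_card fun n h => ?_
          obtain ⟨v, -, rfl⟩ := Finset.mem_image.1 h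
          exact Finset.mem_Icc.2 ⟨hgle v 1 (hL1 v), hm v (Finset.mem_univ v)⟩
      _ = l.length := by simp [hn]
  · intro u v huv hR
    by_cases h : E u v
    · exact (hlt _ _ h).ne'
    · have hcyc : ∃ x, Relation.TransGen (fun a b => E a b ∨ a = u ∧ b = v) x x := by
        by_contra! hno
        refine h (hmax ⟨?_, hno⟩ (fun a b hab => .inl hab) u v (.inr ⟨rfl, rfl⟩))
        rintro a b (hab | ⟨rfl, rfl⟩)
        · exact hER _ _ hab
        · exact hR
      obtain ⟨x, hx⟩ := hcyc
      rcases transGen_sup_pair hx with hx | ⟨h1, h2⟩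
      · exact absurd hx (hac x)
      · exact ((hle _ _ (h2.trans h1)).resolve_left huv.symm).ne

lemma sum_pow_card_le_mul_prod_s3 {κ β : Type*} {I : Finset κ} (hI : I.Nonempty) (B : Finset β)
    {x : κ → β → ℝ} {m : β → ℝ} {Y : κ → ℝ} {M : ℝ} (hM : 0 ≤ M)
    (hx : ∀ k ∈ I, ∀ b ∈ B, 0 ≤ x k b) (hm : ∀ b ∈ B, 0 ≤ m b) (hY : ∀ k ∈ I, 0 < Y k)
    (hxY : ∀ k ∈ I, ∑ b ∈ B, x k b ≤ Y k)
    (hmx : ∀ b ∈ B, m b ^ I.card ≤ M * ∏ k ∈ I, x k b) :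
    (∑ b ∈ B, m b) ^ I.card ≤ M * ∏ k ∈ I, Y k := by
  have hK : I.card ≠ 0 := hI.card_ne_zero
  have hK' : (0 : ℝ) < I.card := by exact_mod_cast hI.card_pos
  have hP : 0 ≤ M * ∏ k ∈ I, Y k := mul_nonneg hM (Finset.prod_nonneg fun k hk => (hY k hk).le)
  set t : ℝ := (M * ∏ k ∈ I, Y k) ^ (I.card : ℝ)⁻¹ with ht
  have ht0 : 0 ≤ t := Real.rpow_nonneg hP _
  have htK : t ^ I.card = M * ∏ k ∈ I, Y k := Real.rpow_inv_natCast_pow hP hK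
  rw [← htK]
  refine pow_le_pow_left₀ (Finset.sum_nonneg hm) ?_ _
  have hz : ∀ b ∈ B, ∀ k ∈ I, 0 ≤ x k b / Y k := fun b hb k hk =>
    div_nonneg (hx k hk b hb) (hY k hk).le
  have hb : ∀ b ∈ B, m b ≤ t * ((∑ k ∈ I, x k b / Y k) / I.card) := by
    intro b hb
    have hamgm := Real.geom_mean_le_arith_mean I (fun _ => 1) (fun k => x k b / Y k)
      (fun _ _ => zero_le_one) (by simpa using hK') (hz b hb)
    simp only [Real.rpow_one, Finset.sum_const, nsmul_eq_mul, mul_one, one_mul] at hamgm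
    have hQ : 0 ≤ ∏ k ∈ I, x k b / Y k := Finset.prod_nonneg (hz b hb)
    refine le_trans ?_ (mul_le_mul_of_nonneg_left hamgm ht0)
    rw [← pow_le_pow_iff_left₀ (hm b hb) (mul_nonneg ht0 (Real.rpow_nonneg hQ _)) hK, mul_pow,
      htK, Real.rpow_inv_natCast_pow hQ hK, mul_assoc, ← Finset.prod_mul_distrib]
    refine (hmx b hb).trans_eq ?_
    congr 1
    exact Finset.prod_congr rfl fun k hk => (mul_div_cancel₀ _ (hY k hk).ne').symm
  calc ∑ b ∈ B, m b ≤ ∑ b ∈ B, t * ((∑ k ∈ I, x k b / Y k) / I.card) := Finset.sum_le_sum hb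
    _ = t * ((∑ k ∈ I, (∑ b ∈ B, x k b) / Y k) / I.card) := by
      rw [← Finset.mul_sum, ← Finset.sum_div, Finset.sum_comm]
      simp_rw [Finset.sum_div]
    _ ≤ t * ((∑ k ∈ I, 1) / I.card) := by
      gcongr with k hk
      exact (div_le_one (hY k hk)).2 (hxY k hk)
    _ = t := by simp [hK]

lemma sum_card_le_card_of_disjoint {β γ : Type*} [DecidableEq γ] {B : Finset β}
    {A : β → Finset γ} {T : Finset γ} (hA : ∀ b ∈ B, A b ⊆ T)
    (hd : ∀ b ∈ B, ∀ b' ∈ B, b ≠ b' → Disjoint (A b) (A b')) :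
    ∑ b ∈ B, (A b).card ≤ T.card := by
  rw [← Finset.card_biUnion hd]
  exact Finset.card_le_card (Finset.biUnion_subset.2 hA)

section Subsets

variable {C : Type*} [Fintype C] [DecidableEq C]

lemma card_filter_mem_powersetCard_univ {s : ℕ} (hs : 0 < s) (i : C) :
    ((Finset.univ.powersetCard s).filter fun S => i ∈ S).card =
      (Fintype.card C - 1).choose (s - 1) := by
  have h1 := Finset.card_filter_add_card_filter_not (s := (Finset.univ : Finset C).powersetCard s)
    (fun S => i ∈ S)
  have h2 : ((Finset.univ.powersetCard s).filter fun S => i ∉ S) =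
      (Finset.univ.erase i).powersetCard s := by
    ext S
    simp only [Finset.mem_filter, Finset.mem_powersetCard, Finset.subset_univ, true_and]
    rw [Finset.subset_erase]
    simp [and_comm]
  rw [h2, Finset.card_powersetCard, Finset.card_powersetCard,
    Finset.card_erase_of_mem (Finset.mem_univ i), Finset.card_univ] at h1
  have h3 : 0 < Fintype.card C := Fintype.card_pos_iff.2 ⟨i⟩
  obtain ⟨n, hn⟩ := Nat.exists_eq_succ_of_ne_zero h3.ne'
  obtain ⟨t, rfl⟩ := Nat.exists_eq_succ_of_ne_zero hs.ne'
  rw [hn] at h1 ⊢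
  simp only [Nat.succ_eq_add_one, Nat.add_sub_cancel, Nat.choose_succ_succ] at h1 ⊢
  omega

lemma prod_powersetCard_eq_swap_s3 (s : ℕ) {i j : C} (F : Finset C → ℝ) :
    ∏ S ∈ Finset.univ.powersetCard s, F S =
      (∏ S ∈ (Finset.univ.powersetCard s).filter fun S => i ∉ S ∧ j ∉ S, F S) *
        ∏ S ∈ (Finset.univ.powersetCard s).filter fun S => i ∈ S,
          if j ∈ S then F S else F S * F (S.map (Equiv.swap i j).toEmbedding) := by
  have h1 : ∀ S : Finset C,
      (if j ∈ S then F S else F S * F (S.map (Equiv.swap i j).toEmbedding)) =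
        F S * if j ∉ S then F (S.map (Equiv.swap i j).toEmbedding) else 1 := by
    intro S; split_ifs <;> simp_all
  simp_rw [h1]
  rw [Finset.prod_mul_distrib, ← Finset.prod_filter, Finset.filter_filter,
    ← Finset.prod_filter_mul_prod_filter_not (Finset.univ.powersetCard s) (fun S => i ∈ S) F,
    ← Finset.prod_filter_mul_prod_filter_not
      ((Finset.univ.powersetCard s).filter fun S => i ∉ S) (fun S => j ∈ S) F,
    Finset.filter_filter, Finset.filter_filter]
  have h2 : ∏ S ∈ (Finset.univ.powersetCard s).filter (fun S => i ∈ S ∧ j ∉ S),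
      F (S.map (Equiv.swap i j).toEmbedding) =
      ∏ S ∈ (Finset.univ.powersetCard s).filter (fun S => i ∉ S ∧ j ∈ S), F S := by
    refine Finset.prod_nbij' (fun S => S.map (Equiv.swap i j).toEmbedding)
      (fun S => S.map (Equiv.swap i j).toEmbedding) ?_ ?_ ?_ ?_ ?_
    · intro S hS
      simpa [Finset.mem_powersetCard, Finset.mem_map_equiv, and_comm] using hS
    · intro S hS
      simpa [Finset.mem_powersetCard, Finset.mem_map_equiv, and_comm] using hS
    · intro S _; ext x; simp [Finset.mem_map_equiv]
    · intro S _; ext x; simp [Finset.mem_map_equiv]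
    · intro S _; rfl
  rw [h2]
  ring

end Subsets

lemma IsGallaiColoring_s3.exists_partition_finset {V C : Type*} {c : V → V → C} [Fintype C]
    [Nontrivial C] (hc : IsGallaiColoring_s3 c) {W : Finset V} (hW : W.Nontrivial) :
    ∃ (i j : C) (p : V → V), i ≠ j ∧ (∃ u ∈ W, ∃ v ∈ W, p u ≠ p v) ∧
      (∀ u ∈ W, ∀ v ∈ W, p u ≠ p v → c u v = i ∨ c u v = j) ∧
      ∀ u ∈ W, ∀ u' ∈ W, ∀ v ∈ W, ∀ v' ∈ W, p u = p u' → p v = p v' → p u ≠ p v →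
        c u v = c u' v' := by
  classical
  have : Nontrivial W := (Set.nontrivial_coe_sort (s := (W : Set V))).2 hW
  obtain ⟨i, j, p, hij, ⟨u₀, v₀, huv⟩, h1, h2⟩ :=
    (hc.comp (f := ((↑) : W → V)) Subtype.val_injective).exists_partition
  let q : V → V := fun v => if h : v ∈ W then p ⟨v, h⟩ else v
  have hq : ∀ v (h : v ∈ W), q v = p ⟨v, h⟩ := fun v h => dif_pos h
  refine ⟨i, j, q, hij, ⟨u₀, u₀.2, v₀, v₀.2, ?_⟩, ?_, ?_⟩
  · rw [hq _ u₀.2, hq _ v₀.2]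
    exact fun h => huv (Subtype.ext h)
  · intro u hu v hv h
    rw [hq _ hu, hq _ hv] at h
    exact h1 ⟨u, hu⟩ ⟨v, hv⟩ fun h' => h (congrArg _ h')
  · intro u hu u' hu' v hv v' hv' huu hvv h
    rw [hq _ hu, hq _ hv] at h
    rw [hq _ hu, hq _ hu', Subtype.coe_inj] at huu
    rw [hq _ hv, hq _ hv', Subtype.coe_inj] at hvv
    exact h2 ⟨u, hu⟩ ⟨u', hu'⟩ ⟨v, hv⟩ ⟨v', hv'⟩ huu hvv fun h' => h (congrArg _ h')

/-- If `g S` is a proper coloring of the graph formed by the colors in `S`, for every `S`, then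
the product of the numbers of values of `g S` over the `s`-sets `S` is large. -/
lemma IsGallaiColoring_s3.pow_le_prod_card_image {V C : Type*} {c : V → V → C} [Fintype C]
    [DecidableEq C] [Nontrivial C] (hc : IsGallaiColoring_s3 c) {s : ℕ} (hs : 0 < s)
    (hsC : s ≤ Fintype.card C) {g : Finset C → V → ℕ}
    (hg : ∀ S u v, u ≠ v → c u v ∈ S → g S u ≠ g S v) (W : Finset V) :
    (W.card : ℝ) ^ (Fintype.card C - 1).choose (s - 1) ≤
      ∏ S ∈ Finset.univ.powersetCard s, ((W.image (g S)).card : ℝ) := by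
  classical
  have hK : 0 < (Fintype.card C - 1).choose (s - 1) := Nat.choose_pos (by omega)
  induction W using Finset.strongInduction with
  | _ W ih =>
  rcases W.eq_empty_or_nonempty with rfl | hne
  · simp [hK.ne']
  rcases hne.exists_eq_singleton_or_nontrivial with ⟨v, rfl⟩ | hW
  · simp
  obtain ⟨i, j, p, hij, ⟨u₀, hu₀, v₀, hv₀, huv⟩, h1, h2⟩ := hc.exists_partition_finset hW
  let blk : V → Finset V := fun b => W.filter fun v => p v = b
  have hsub : ∀ b, blk b ⊆ W := fun b => Finset.filter_subset _ _
  have hmem : ∀ {v b}, v ∈ blk b → v ∈ W ∧ p v = b := fun h => Finset.mem_filter.1 h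
  have hssub : ∀ b, blk b ⊂ W := by
    intro b
    refine (hsub b).ssubset_of_ne fun h => huv ?_
    rw [← h] at hu₀ hv₀
    rw [(hmem hu₀).2, (hmem hv₀).2]
  let f : Finset V → Finset C → ℝ := fun U S => ((U.image (g S)).card : ℝ)
  have hf0 : ∀ U S, 0 ≤ f U S := fun U S => Nat.cast_nonneg _
  have hfW : ∀ S, 0 < f W S := fun S => by
    dsimp only [f]
    exact_mod_cast Finset.card_pos.2 (hne.image _)
  have hmono : ∀ b S, f (blk b) S ≤ f W S := fun b S => by
    dsimp only [f]
    exact_mod_cast Finset.card_le_card (Finset.image_subset_image (hsub b))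
  let I := ((Finset.univ : Finset C).powersetCard s).filter fun S => i ∈ S
  have hI : I.card = (Fintype.card C - 1).choose (s - 1) := card_filter_mem_powersetCard_univ hs i
  let σ : Finset C → Finset C := fun S => S.map (Equiv.swap i j).toEmbedding
  let Y : Finset V → Finset C → ℝ := fun U S => if j ∈ S then f U S else f U S * f U (σ S)
  have hY0 : ∀ U S, 0 ≤ Y U S := fun U S => by
    dsimp only [Y]; split_ifs
    · exact hf0 _ _
    · exact mul_nonneg (hf0 _ _) (hf0 _ _)
  have hYW : ∀ S, 0 < Y W S := fun S => by
    dsimp only [Y]; split_ifs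
    · exact hfW _
    · exact mul_pos (hfW _) (hfW _)
  have hsum : ∀ S ∈ I, ∑ b ∈ W.image p, Y (blk b) S ≤ Y W S := by
    intro S hS
    have hiS : i ∈ S := (Finset.mem_filter.1 hS).2
    dsimp only [Y]
    split_ifs with hjS
    · dsimp only [f]
      exact_mod_cast sum_card_le_card_of_disjoint
        (fun b _ => Finset.image_subset_image (hsub b)) (by
          intro b _ b' _ hbb
          rw [Finset.disjoint_left]
          intro n hn hn'
          obtain ⟨u, hub, rfl⟩ := Finset.mem_image.1 hn
          obtain ⟨v, hvb, hgv⟩ := Finset.mem_image.1 hn'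
          obtain ⟨hu, rfl⟩ := hmem hub
          obtain ⟨hv, rfl⟩ := hmem hvb
          refine hg S u v (fun h => hbb (congrArg p h)) ?_ hgv.symm
          rcases h1 u hu v hv hbb with h | h <;> rwa [h])
    · have hjσ : j ∈ σ S := by simpa [σ, Finset.mem_map_equiv] using hiS
      have := sum_card_le_card_of_disjoint (B := W.image p)
        (A := fun b => (blk b).image (g S) ×ˢ (blk b).image (g (σ S)))
        (T := W.image (g S) ×ˢ W.image (g (σ S)))
        (fun b _ => Finset.product_subset_product (Finset.image_subset_image (hsub b))
          (Finset.image_subset_image (hsub b))) (by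
          intro b _ b' _ hbb
          rw [Finset.disjoint_left]
          rintro ⟨n, m⟩ hn hn'
          rw [Finset.mem_product] at hn hn'
          obtain ⟨u, hub, hgu⟩ := Finset.mem_image.1 hn.1
          obtain ⟨v, hvb, hgv⟩ := Finset.mem_image.1 hn'.1
          obtain ⟨u', hub', hgu'⟩ := Finset.mem_image.1 hn.2
          obtain ⟨v', hvb', hgv'⟩ := Finset.mem_image.1 hn'.2
          obtain ⟨hu, rfl⟩ := hmem hub
          obtain ⟨hv, rfl⟩ := hmem hvb
          obtain ⟨hu', huu⟩ := hmem hub'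
          obtain ⟨hv', hvv⟩ := hmem hvb'
          rcases h1 u hu v hv hbb with h | h
          · exact hg S u v (fun h => hbb (congrArg p h)) (by rwa [h]) (hgu.trans hgv.symm)
          · refine hg (σ S) u' v' (fun h => hbb ?_) ?_ (hgu'.trans hgv'.symm)
            · rw [← huu, ← hvv, h]
            · rwa [← h2 u hu u' hu' v hv v' hv' huu.symm hvv.symm hbb, h])
      simp only [Finset.card_product] at this
      dsimp only [f]
      exact_mod_cast this
  have key := sum_pow_card_le_mul_prod_s3 (I := I) (Finset.card_pos.1 (hI ▸ hK)) (W.image p)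
    (x := fun S b => Y (blk b) S) (m := fun b => ((blk b).card : ℝ)) (Y := Y W)
    (M := ∏ S ∈ ((Finset.univ : Finset C).powersetCard s).filter (fun S => i ∉ S ∧ j ∉ S), f W S)
    (Finset.prod_nonneg fun S _ => hf0 _ _) (fun S _ b _ => hY0 _ _)
    (fun b _ => Nat.cast_nonneg _) (fun S _ => hYW S) hsum (by
      intro b _
      rw [hI]
      refine (ih (blk b) (hssub b)).trans ?_
      rw [prod_powersetCard_eq_swap_s3 s (i := i) (j := j) (fun S => (((blk b).image (g S)).card : ℝ))]
      exact mul_le_mul_of_nonneg_right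
        (Finset.prod_le_prod (fun S _ => hf0 _ _) fun S _ => hmono b S)
        (Finset.prod_nonneg fun S _ => hY0 _ _))
  rw [prod_powersetCard_eq_swap_s3 s (i := i) (j := j), ← hI]
  refine le_trans (le_of_eq ?_) key
  rw [Finset.card_eq_sum_card_image p W]
  push_cast
  rfl

/-- Every Gallai `r`-coloring (no rainbow triangle, orientations ignored) of an
`n`-vertex tournament contains a directed path on at least `n^(s/r)` vertices whose
edges use at most `s` colors, for positive integers `s ≤ r`. The tournament is given
by a relation `o` such that for distinct vertices exactly one orientation holds; a
directed path is a duplicate-free list of vertices with consecutive vertices joined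
by forward edges. -/
theorem stmt_3 (r s n : ℕ) (hr : 0 < r) (hs : 0 < s) (hn : 0 < n) (hsr : s ≤ r)
    (o : Fin n → Fin n → Prop)
    (hirr : ∀ u, ¬ o u u)
    (ho : ∀ u v : Fin n, u ≠ v → (o u v ↔ ¬ o v u))
    (c : Fin n → Fin n → Fin r)
    (hsym : ∀ u v, c u v = c v u)
    (hGallai : ∀ u v w : Fin n, u ≠ v → v ≠ w → u ≠ w →
      ¬(c u v ≠ c v w ∧ c v w ≠ c u w ∧ c u v ≠ c u w)) :
    ∃ S : Finset (Fin r), S.card ≤ s ∧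
      ∃ l : List (Fin n), l.Nodup ∧
        l.Chain' (fun x y => o x y ∧ c x y ∈ S) ∧
        (n : ℝ) ^ ((s : ℝ) / (r : ℝ)) ≤ (l.length : ℝ) := by
  have hc : IsGallaiColoring_s3 c := ⟨hsym, hGallai⟩
  have : Nonempty (Fin n) := ⟨⟨0, hn⟩⟩
  have hr' : (r : ℝ) ≠ 0 := by exact_mod_cast hr.ne'
  choose l g hnd hch hlen hg' using fun S : Finset (Fin r) =>
    exists_path_and_proper_coloring fun x y => o x y ∧ c x y ∈ S
  have hg : ∀ S u v, u ≠ v → c u v ∈ S → g S u ≠ g S v := by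
    intro S u v huv hS
    by_cases h : o u v
    · exact hg' S u v huv ⟨h, hS⟩
    · exact (hg' S v u huv.symm ⟨(ho v u huv.symm).2 h, hsym u v ▸ hS⟩).symm
  suffices h : ∃ S : Finset (Fin r), S.card ≤ s ∧
      (n : ℝ) ^ ((s : ℝ) / (r : ℝ)) ≤ ((Finset.univ.image (g S)).card : ℝ) by
    obtain ⟨S, hS, hle⟩ := h
    exact ⟨S, hS, l S, hnd S, hch S, hle.trans (by exact_mod_cast hlen S)⟩
  rcases hsr.eq_or_lt with rfl | hlt
  · refine ⟨Finset.univ, by simp, ?_⟩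
    rw [div_self hr', Real.rpow_one, Finset.card_image_of_injective _ fun u v huv => ?_]
    · simp
    · by_contra hne
      exact hg _ u v hne (Finset.mem_univ _) huv
  · by_contra! hcon
    have : Nontrivial (Fin r) := Fin.nontrivial_iff_two_le.2 (by omega)
    have hprod := hc.pow_le_prod_card_image hs (by simpa using hsr) hg Finset.univ
    have hlt' : ∏ S ∈ (Finset.univ : Finset (Fin r)).powersetCard s,
        ((Finset.univ.image (g S)).card : ℝ) <
        ∏ S ∈ (Finset.univ : Finset (Fin r)).powersetCard s, (n : ℝ) ^ ((s : ℝ) / (r : ℝ)) := by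
      refine Finset.prod_lt_prod_of_nonempty (fun S _ => ?_) (fun S hS => ?_) ?_
      · exact_mod_cast Finset.card_pos.2 (Finset.univ_nonempty.image _)
      · exact hcon S (Finset.mem_powersetCard.1 hS).2.le
      · exact Finset.powersetCard_nonempty.2 (by simpa using hsr)
    refine (hprod.trans_lt hlt').ne ?_
    have hchoose : (r : ℝ) * ((r - 1).choose (s - 1) : ℝ) = r.choose s * s := by
      obtain ⟨a, rfl⟩ := Nat.exists_eq_succ_of_ne_zero hr.ne'
      obtain ⟨b, rfl⟩ := Nat.exists_eq_succ_of_ne_zero hs.ne'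
      exact_mod_cast Nat.add_one_mul_choose_eq a b
    simp only [Finset.prod_const, Finset.card_powersetCard, Finset.card_univ, Fintype.card_fin]
    rw [← Real.rpow_natCast, ← Real.rpow_natCast, ← Real.rpow_mul (Nat.cast_nonneg n)]
    congr 1
    field_simp
    linarith
end
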